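/- Let x̲ = min_{1≤k≤K} x_k, x̄ = max_{1≤k≤K} x_k, y̲ = min_{1≤k≤K} y_k, ȳ = max_{1≤k≤K} y_k, and suppose λ_k ≥ 0 for all k. Then for every x, y ∈ ℝ and every p ≥ 0, ψ(clamp(x, x̲, x̄), clamp(y, y̲, ȳ), p) ≥ ψ(x, y, p), where clamp(t, a, b) = max(a, min(t, b)). Consequently, any maximizer of ψ over location can be taken inside the box [x̲, x̄] × [y̲, ȳ]. -/

import Mathlib

/-- Achievable rate of user `k` when the UAV is at horizontal location `(x, y)`
at altitude `H`, transmitting with power `p`, with reference SNR `γ₀`. -/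
noncomputable def rate (γ₀ H : ℝ) {K : ℕ} (xs ys : Fin K → ℝ) (k : Fin K)
    (x y p : ℝ) : ℝ :=
  Real.logb 2 (1 + γ₀ * p / ((x - xs k) ^ 2 + (y - ys k) ^ 2 + H ^ 2))

/-- The weighted Lagrangian objective `ψ(x, y, p) = ∑ λ_k R_k(x, y, p) − μ p`. -/
noncomputable def psi (γ₀ H : ℝ) {K : ℕ} (xs ys : Fin K → ℝ)
    (lam : Fin K → ℝ) (μ : ℝ) (x y p : ℝ) : ℝ :=
  (∑ k, lam k * rate γ₀ H xs ys k x y p) - μ * p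

/-- `clamp t a b = max(a, min(t, b))`. -/
noncomputable def clamp (t a b : ℝ) : ℝ := max a (min t b)

/-!
Clamping to an interval is 1-Lipschitz and fixes the points of the interval, so clamping each
coordinate of the UAV location brings it no farther from any user. Each rate is antitone in the
distance to its user, and the weights are nonnegative.
-/

theorem abs_clamp_sub_clamp_le (s t a b : ℝ) : |clamp s a b - clamp t a b| ≤ |s - t| :=
  calc |max a (min s b) - max a (min t b)|
      ≤ |min s b - min t b| := by
        simpa using abs_max_sub_max_le_max a (min s b) a (min t b)
    _ ≤ |s - t| := by
        simpa using abs_min_sub_min_le_max s b t b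

theorem clamp_of_mem_Icc {a b c : ℝ} (hc : c ∈ Set.Icc a b) : clamp c a b = c := by
  rw [clamp, min_eq_left hc.2, max_eq_right hc.1]

theorem sq_clamp_sub_le {a b c : ℝ} (hc : c ∈ Set.Icc a b) (t : ℝ) :
    (clamp t a b - c) ^ 2 ≤ (t - c) ^ 2 := by
  have h := abs_clamp_sub_clamp_le t c a b
  rw [clamp_of_mem_Icc hc] at h
  exact sq_le_sq.mpr h

theorem mem_Icc_inf'_sup' {ι α : Type*} [Lattice α] {s : Finset ι} (f : ι → α) {i : ι}
    (hi : i ∈ s) : f i ∈ Set.Icc (s.inf' ⟨i, hi⟩ f) (s.sup' ⟨i, hi⟩ f) :=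
  ⟨s.inf'_le f hi, s.le_sup' f hi⟩

section Objective

variable {K : ℕ} {xs ys : Fin K → ℝ} {γ₀ H x y x' y' p : ℝ}

theorem rate_le_rate_of_sq_dist_le (hγp : 0 ≤ γ₀ * p) (hH : H ≠ 0) {k : Fin K}
    (hdist : (x' - xs k) ^ 2 + (y' - ys k) ^ 2 ≤ (x - xs k) ^ 2 + (y - ys k) ^ 2) :
    rate γ₀ H xs ys k x y p ≤ rate γ₀ H xs ys k x' y' p := by
  have hsnr : γ₀ * p / ((x - xs k) ^ 2 + (y - ys k) ^ 2 + H ^ 2) ≤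
      γ₀ * p / ((x' - xs k) ^ 2 + (y' - ys k) ^ 2 + H ^ 2) := by
    gcongr
  exact Real.logb_le_logb_of_le one_lt_two (by positivity) (by gcongr)

theorem psi_le_psi_of_sq_dist_le (hγp : 0 ≤ γ₀ * p) (hH : H ≠ 0) {lam : Fin K → ℝ}
    (hlam : ∀ k, 0 ≤ lam k) (μ : ℝ)
    (hdist : ∀ k, (x' - xs k) ^ 2 + (y' - ys k) ^ 2 ≤ (x - xs k) ^ 2 + (y - ys k) ^ 2) :
    psi γ₀ H xs ys lam μ x y p ≤ psi γ₀ H xs ys lam μ x' y' p := by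
  have hrate (k : Fin K) : rate γ₀ H xs ys k x y p ≤ rate γ₀ H xs ys k x' y' p :=
    rate_le_rate_of_sq_dist_le hγp hH (hdist k)
  unfold psi
  gcongr with k
  · exact hlam k
  · exact hrate k

end Objective

/-- Clamping the UAV location into the bounding box of the users can only
increase `ψ`: any maximizer of `ψ` over location can be taken inside the box. -/
theorem stmt2 (K : ℕ) (hK : 0 < K) (xs ys : Fin K → ℝ) (γ₀ H : ℝ)
    (hγ : 0 < γ₀) (hH : 0 < H) (lam : Fin K → ℝ) (hlam : ∀ k, 0 ≤ lam k)
    (μ : ℝ) (x y p : ℝ) (hp : 0 ≤ p) :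
    psi γ₀ H xs ys lam μ
        (clamp x (Finset.univ.inf' ⟨⟨0, hK⟩, Finset.mem_univ _⟩ xs)
                 (Finset.univ.sup' ⟨⟨0, hK⟩, Finset.mem_univ _⟩ xs))
        (clamp y (Finset.univ.inf' ⟨⟨0, hK⟩, Finset.mem_univ _⟩ ys)
                 (Finset.univ.sup' ⟨⟨0, hK⟩, Finset.mem_univ _⟩ ys)) p
      ≥ psi γ₀ H xs ys lam μ x y p := by
  refine psi_le_psi_of_sq_dist_le (mul_nonneg hγ.le hp) hH.ne' hlam μ fun k => ?_
  exact add_le_add (sq_clamp_sub_le (mem_Icc_inf'_sup' xs (Finset.mem_univ k)) x)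
    (sq_clamp_sub_le (mem_Icc_inf'_sup' ys (Finset.mem_univ k)) y)
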